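/- (Lemma 1, term part.) If ≻ is a well-founded and transitive relation on ground terms L.Term Empty, then the closure ordering ≻_tc is a well-founded relation on ground term closures (pairs (t, σ) with t : L.Term ℕ and σ : ℕ → L.Term Empty). -/

import Mathlib

/-!
Since `≻` is well founded, everything comes down to well-foundedness of the proper instance
relation. Let variables weigh `1` and function symbols `2`, so that the weight-`1` terms are exactly
the variables. Substitution never decreases weight, and if it preserves the weight of `t` then it
merely renames the variables of `t`. If such a renaming is injective on these variables it can be
undone, so a proper instance of `t` of the same weight has fewer distinct variables than `t`.
Passing to ever more general terms thus eventually fixes the weight and then strictly increases the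
number of distinct variables, which the weight bounds.
-/

namespace ClosureOrder

variable {L : FirstOrder.Language}

/-- `s` is an instance of `t`. -/
def IsInstance (s t : L.Term ℕ) : Prop :=
  ∃ θ : ℕ → L.Term ℕ, s = t.subst θ

/-- `s` is a proper instance of `t`. -/
def ProperInstance (s t : L.Term ℕ) : Prop :=
  IsInstance s t ∧ ¬ IsInstance t s

/-- The closure ordering `≻_tc` on ground term closures induced by a relation `r` (`≻`)
on ground terms. -/
def ClosGT (r : L.Term Empty → L.Term Empty → Prop)
    (c d : L.Term ℕ × (ℕ → L.Term Empty)) : Prop :=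
  r (c.1.subst c.2) (d.1.subst d.2) ∨
    (c.1.subst c.2 = d.1.subst d.2 ∧ ProperInstance c.1 d.1)

section Terms

open FirstOrder.Language

variable {α β γ : Type*}

theorem subst_congr [DecidableEq α] {t : L.Term α} {θ η : α → L.Term β}
    (h : ∀ x ∈ t.varFinset, θ x = η x) : t.subst θ = t.subst η := by
  induction t with
  | var x => exact h x (by simp)
  | func f ts ih =>
    simp only [Term.subst]
    congr 1
    funext i
    refine ih i fun x hx => h x ?_
    simpa using ⟨i, hx⟩

theorem subst_var (t : L.Term α) : t.subst var = t := by
  induction t with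
  | var x => rfl
  | func f ts ih => simp [Term.subst, ih]

theorem subst_subst (t : L.Term α) (θ : α → L.Term β) (η : β → L.Term γ) :
    (t.subst θ).subst η = t.subst fun x => (θ x).subst η := by
  induction t with
  | var x => rfl
  | func f ts ih => simp [Term.subst, ih]

theorem varFinset_subst [DecidableEq α] [DecidableEq β] (t : L.Term α) (θ : α → L.Term β) :
    (t.subst θ).varFinset = t.varFinset.biUnion fun x => (θ x).varFinset := by
  induction t with
  | var x => simp
  | func f ts ih => simp [ih, Finset.biUnion_biUnion]

/-- The size of a term, counting each variable occurrence once and each function symbol occurrence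
twice. Counting function symbols twice tells constants from variables by their weight. -/
def weight : L.Term α → ℕ
  | .var _ => 1
  | .func _ ts => 2 + ∑ i, weight (ts i)

theorem weight_pos (t : L.Term α) : 0 < weight t := by
  cases t <;> simp [weight]

theorem exists_eq_var_of_weight_eq_one {t : L.Term α} (h : weight t = 1) : ∃ x, t = var x := by
  cases t with
  | var x => exact ⟨x, rfl⟩
  | func _ ts =>
    simp only [weight] at h
    omega

theorem card_varFinset_le_weight [DecidableEq α] (t : L.Term α) :
    t.varFinset.card ≤ weight t := by
  induction t with
  | var x => simp [weight]
  | func _ ts ih =>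
    calc (Finset.univ.biUnion fun i => (ts i).varFinset).card
        ≤ ∑ i, (ts i).varFinset.card := Finset.card_biUnion_le
      _ ≤ ∑ i, weight (ts i) := Finset.sum_le_sum fun i _ => ih i
      _ ≤ 2 + ∑ i, weight (ts i) := Nat.le_add_left _ _

theorem weight_le_weight_subst (t : L.Term α) (θ : α → L.Term β) :
    weight t ≤ weight (t.subst θ) := by
  induction t with
  | var x => exact weight_pos (θ x)
  | func _ ts ih => exact Nat.add_le_add_left (Finset.sum_le_sum fun i _ => ih i) 2

theorem exists_eq_var_of_weight_subst_eq [DecidableEq α] {t : L.Term α} {θ : α → L.Term β}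
    (h : weight (t.subst θ) = weight t) {x : α} (hx : x ∈ t.varFinset) : ∃ y, θ x = var y := by
  induction t with
  | var z =>
    obtain rfl : x = z := by simpa using hx
    exact exists_eq_var_of_weight_eq_one h
  | func _ ts ih =>
    have hsum : ∑ i, weight (ts i) = ∑ i, weight ((ts i).subst θ) :=
      (Nat.add_left_cancel h).symm
    have hargs : ∀ i, weight (ts i) = weight ((ts i).subst θ) := by
      simpa using (Finset.sum_eq_sum_iff_of_le fun i _ => weight_le_weight_subst (ts i) θ).1 hsum
    obtain ⟨i, hi⟩ : ∃ i, x ∈ (ts i).varFinset := by simpa using hx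
    exact ih i (hargs i).symm hi

theorem exists_subst_subst_eq_self_of_injective [DecidableEq α] {t : L.Term α} {θ : α → L.Term β}
    {g : t.varFinset → β} (hg : g.Injective) (hθ : ∀ x : t.varFinset, θ x = var (g x)) :
    ∃ η : β → L.Term α, (t.subst θ).subst η = t := by
  -- Off the range of `g` any value will do; `t` is one that exists even if `α` is empty.
  let η : β → L.Term α := Function.extend g (fun x => var x) fun _ => t
  have hη : ∀ x ∈ t.varFinset, (θ x).subst η = var x := fun x hx => by
    rw [hθ ⟨x, hx⟩, Term.subst]
    exact hg.extend_apply (fun x => var x.1) _ ⟨x, hx⟩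
  exact ⟨η, by rw [subst_subst, subst_congr hη, subst_var]⟩

theorem card_varFinset_subst_lt_of_not_injective [DecidableEq α] [DecidableEq β] {t : L.Term α}
    {θ : α → L.Term β} {g : t.varFinset → β} (hg : ¬ g.Injective)
    (hθ : ∀ x : t.varFinset, θ x = var (g x)) :
    (t.subst θ).varFinset.card < t.varFinset.card := by
  have himage : (t.subst θ).varFinset = t.varFinset.attach.image g := by
    rw [varFinset_subst, ← Finset.attach_biUnion]
    simp only [hθ, Term.varFinset, Finset.biUnion_singleton]
  have hne : (t.varFinset.attach.image g).card ≠ t.varFinset.attach.card := fun heq =>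
    hg fun x y => Finset.card_image_iff.1 heq (Finset.mem_attach _ x) (Finset.mem_attach _ y)
  calc (t.subst θ).varFinset.card
      = (t.varFinset.attach.image g).card := by rw [himage]
    _ < t.varFinset.attach.card := lt_of_le_of_ne Finset.card_image_le hne
    _ = t.varFinset.card := Finset.card_attach

theorem card_varFinset_subst_lt [DecidableEq α] [DecidableEq β] {t : L.Term α}
    {θ : α → L.Term β} (hweight : weight (t.subst θ) = weight t)
    (hθ : ∀ η : β → L.Term α, (t.subst θ).subst η ≠ t) :
    (t.subst θ).varFinset.card < t.varFinset.card := by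
  have hvar (x : t.varFinset) : ∃ y, θ x = var y :=
    exists_eq_var_of_weight_subst_eq hweight x.2
  choose g hg using hvar
  refine card_varFinset_subst_lt_of_not_injective (fun hinj => ?_) hg
  obtain ⟨η, hη⟩ := exists_subst_subst_eq_self_of_injective hinj hg
  exact hθ η hη

end Terms

theorem ProperInstance.weight_lt_or_card_varFinset_lt {s t : L.Term ℕ} (h : ProperInstance s t) :
    weight t < weight s ∨ weight t = weight s ∧ s.varFinset.card < t.varFinset.card := by
  obtain ⟨⟨θ, rfl⟩, hgen⟩ := h
  refine (weight_le_weight_subst t θ).lt_or_eq.imp_right fun hweight => ⟨hweight, ?_⟩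
  exact card_varFinset_subst_lt hweight.symm fun η hη => hgen ⟨η, hη.symm⟩

theorem properInstance_wellFounded :
    WellFounded (Function.swap (ProperInstance (L := L))) := by
  let rank (t : L.Term ℕ) : ℕ ×ₗ ℕ := toLex (weight t, weight t - t.varFinset.card)
  refine Subrelation.wf (r := InvImage (· < ·) rank) (fun {t s} h => ?_)
    (InvImage.wf rank wellFounded_lt)
  refine Prod.Lex.toLex_lt_toLex.2 (h.weight_lt_or_card_varFinset_lt.imp_right ?_)
  rintro ⟨hweight, hcard⟩
  have hle : t.varFinset.card ≤ weight t := card_varFinset_le_weight t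
  exact ⟨hweight, by dsimp only; omega⟩

theorem closGT_wellFounded_general {r : L.Term Empty → L.Term Empty → Prop}
    (hwf : WellFounded (Function.swap r)) : WellFounded (Function.swap (ClosGT r)) := by
  let key (c : L.Term ℕ × (ℕ → L.Term Empty)) : L.Term Empty × L.Term ℕ := (c.1.subst c.2, c.1)
  refine Subrelation.wf ?_ (InvImage.wf key (hwf.prod_lex properInstance_wellFounded))
  rintro d c (hr | ⟨heq, hproper⟩)
  · exact Prod.lex_def.2 (Or.inl hr)
  · exact Prod.lex_def.2 (Or.inr ⟨heq.symm, hproper⟩)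

/-- Lemma 1 (term part): if `≻` is a well-founded (i.e. its converse `≺` is a well-founded
relation in the sense of Lean) and transitive relation on ground terms, then the closure
ordering `≻_tc` is a well-founded relation on ground term closures. -/
theorem closGT_wellFounded (r : L.Term Empty → L.Term Empty → Prop)
    (htrans : ∀ {a b c}, r a b → r b c → r a c)
    (hwf : WellFounded (Function.swap r)) :
    WellFounded (Function.swap (ClosGT r)) :=
  closGT_wellFounded_general hwf

end ClosureOrder
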